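/- arXiv:1804.04951 — 2 statements merged into one kernel-verified Lean document; each statement's English description precedes it below -/
import Mathlib

section
/- For linear maps φ₂ : U → V and φ₁ : V → W between finite-dimensional real vector spaces, the forward and backward operations on Dirac structures satisfy F(φ₁ ∘ φ₂) = F φ₁ ∘ F φ₂ and B(φ₁ ∘ φ₂) = B φ₂ ∘ B φ₁; i.e., for any Dirac structure D on U, F(φ₁∘φ₂)(D) = Fφ₁(Fφ₂(D)), and for any Dirac structure D' on W, B(φ₁∘φ₂)(D') = Bφ₂(Bφ₁(D')). -/
open Module

def pairLR {V : Type*} [AddCommGroup V] [Module ℝ V]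
    (x y : V × Module.Dual ℝ V) : ℝ := x.2 y.1 + y.2 x.1

def orthSet {V : Type*} [AddCommGroup V] [Module ℝ V]
    (D : Submodule ℝ (V × Module.Dual ℝ V)) : Set (V × Module.Dual ℝ V) :=
  {x | ∀ y ∈ D, pairLR x y = 0}

def IsDirac {V : Type*} [AddCommGroup V] [Module ℝ V]
    (D : Submodule ℝ (V × Module.Dual ℝ V)) : Prop :=
  (D : Set (V × Module.Dual ℝ V)) = orthSet D

def forwardD {V W : Type*} [AddCommGroup V] [Module ℝ V] [AddCommGroup W] [Module ℝ W]
    (φ : V →ₗ[ℝ] W) (D : Submodule ℝ (V × Module.Dual ℝ V)) :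
    Submodule ℝ (W × Module.Dual ℝ W) :=
  Submodule.map (φ.prodMap (LinearMap.id : Module.Dual ℝ W →ₗ[ℝ] Module.Dual ℝ W))
    (Submodule.comap ((LinearMap.id : V →ₗ[ℝ] V).prodMap φ.dualMap) D)

def backwardD {V W : Type*} [AddCommGroup V] [Module ℝ V] [AddCommGroup W] [Module ℝ W]
    (φ : V →ₗ[ℝ] W) (D : Submodule ℝ (W × Module.Dual ℝ W)) :
    Submodule ℝ (V × Module.Dual ℝ V) :=
  Submodule.map ((LinearMap.id : V →ₗ[ℝ] V).prodMap φ.dualMap)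
    (Submodule.comap (φ.prodMap (LinearMap.id : Module.Dual ℝ W →ₗ[ℝ] Module.Dual ℝ W)) D)

section

variable {U V W : Type*} [AddCommGroup U] [Module ℝ U] [AddCommGroup V] [Module ℝ V]
  [AddCommGroup W] [Module ℝ W]

lemma mem_forwardD (φ : V →ₗ[ℝ] W) (D : Submodule ℝ (V × Dual ℝ V)) (w : W) (β : Dual ℝ W) :
    (w, β) ∈ forwardD φ D ↔ ∃ v, φ v = w ∧ (v, φ.dualMap β) ∈ D := by
  simp [forwardD, and_comm]

lemma mem_backwardD (φ : V →ₗ[ℝ] W) (D : Submodule ℝ (W × Dual ℝ W)) (v : V) (α : Dual ℝ V) :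
    (v, α) ∈ backwardD φ D ↔ ∃ β, φ.dualMap β = α ∧ (φ v, β) ∈ D := by
  simp [backwardD, and_comm]

theorem forwardD_comp (φ₁ : V →ₗ[ℝ] W) (φ₂ : U →ₗ[ℝ] V) (D : Submodule ℝ (U × Dual ℝ U)) :
    forwardD (φ₁ ∘ₗ φ₂) D = forwardD φ₁ (forwardD φ₂ D) := by
  ext ⟨w, γ⟩
  calc (w, γ) ∈ forwardD (φ₁ ∘ₗ φ₂) D
      ↔ ∃ u, φ₁ (φ₂ u) = w ∧ (u, φ₂.dualMap (φ₁.dualMap γ)) ∈ D := mem_forwardD ..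
    _ ↔ ∃ v, φ₁ v = w ∧ ∃ u, φ₂ u = v ∧ (u, φ₂.dualMap (φ₁.dualMap γ)) ∈ D := by
      constructor
      · rintro ⟨u, hw, hD⟩
        exact ⟨φ₂ u, hw, u, rfl, hD⟩
      · rintro ⟨_, hw, u, rfl, hD⟩
        exact ⟨u, hw, hD⟩
    _ ↔ (w, γ) ∈ forwardD φ₁ (forwardD φ₂ D) := by simp only [mem_forwardD]

theorem backwardD_comp (φ₁ : V →ₗ[ℝ] W) (φ₂ : U →ₗ[ℝ] V) (D : Submodule ℝ (W × Dual ℝ W)) :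
    backwardD (φ₁ ∘ₗ φ₂) D = backwardD φ₂ (backwardD φ₁ D) := by
  ext ⟨u, α⟩
  calc (u, α) ∈ backwardD (φ₁ ∘ₗ φ₂) D
      ↔ ∃ γ, φ₂.dualMap (φ₁.dualMap γ) = α ∧ (φ₁ (φ₂ u), γ) ∈ D := mem_backwardD ..
    _ ↔ ∃ β, φ₂.dualMap β = α ∧ ∃ γ, φ₁.dualMap γ = β ∧ (φ₁ (φ₂ u), γ) ∈ D := by
      constructor
      · rintro ⟨γ, hα, hD⟩
        exact ⟨φ₁.dualMap γ, hα, γ, rfl, hD⟩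
      · rintro ⟨_, hα, γ, rfl, hD⟩
        exact ⟨γ, hα, hD⟩
    _ ↔ (u, α) ∈ backwardD φ₂ (backwardD φ₁ D) := by simp only [mem_backwardD]

theorem stmt10_general (φ₂ : U →ₗ[ℝ] V) (φ₁ : V →ₗ[ℝ] W) :
    (∀ D : Submodule ℝ (U × Dual ℝ U),
      forwardD (φ₁ ∘ₗ φ₂) D = forwardD φ₁ (forwardD φ₂ D)) ∧
    (∀ D' : Submodule ℝ (W × Dual ℝ W),
      backwardD (φ₁ ∘ₗ φ₂) D' = backwardD φ₂ (backwardD φ₁ D')) :=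
  ⟨forwardD_comp φ₁ φ₂, backwardD_comp φ₁ φ₂⟩

end

theorem stmt10 {U V W : Type*} [AddCommGroup U] [Module ℝ U]
    [AddCommGroup V] [Module ℝ V] [AddCommGroup W] [Module ℝ W]
    [FiniteDimensional ℝ U] [FiniteDimensional ℝ V] [FiniteDimensional ℝ W]
    (φ₂ : U →ₗ[ℝ] V) (φ₁ : V →ₗ[ℝ] W) :
    (∀ D : Submodule ℝ (U × Module.Dual ℝ U), IsDirac D →
      forwardD (φ₁ ∘ₗ φ₂) D = forwardD φ₁ (forwardD φ₂ D)) ∧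
    (∀ D' : Submodule ℝ (W × Module.Dual ℝ W), IsDirac D' →
      backwardD (φ₁ ∘ₗ φ₂) D' = backwardD φ₂ (backwardD φ₁ D')) := by
  obtain ⟨forward_comp, backward_comp⟩ := stmt10_general φ₂ φ₁
  exact ⟨fun D _ ↦ forward_comp D, fun D' _ ↦ backward_comp D'⟩
end

section
/- Let φ : V → W be linear between finite-dimensional real vector spaces. If Σ ⊆ V ⊕ V* is isotropic (resp. coisotropic), then Fφ(Σ) = {(φv, w*) : (v, φ*w*) ∈ Σ} ⊆ W ⊕ W* is isotropic (resp. coisotropic). If Σ' ⊆ W ⊕ W* is isotropic (resp. coisotropic), then Bφ(Σ') = {(v, φ*w*) : (φv, w*) ∈ Σ'} ⊆ V ⊕ V* is isotropic (resp. coisotropic). -/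
open Module

/-!
Both `forwardD φ` and `backwardD φ` transport a subspace along the linear relation
`{((v, φ* β), (φ v, β))}` between `V ⊕ V*` and `W ⊕ W*`, read from left to right or from right to
left. This relation is Lagrangian: it is its own orthogonal complement for the difference of the two
pairings. Transport along a Lagrangian relation out of a finite-dimensional space commutes with
orthogonal complements, and it is monotone, so it preserves both `S ≤ Sᗮ` and `Sᗮ ≤ S`.
-/

section Annihilator

variable {K A X : Type*} [Field K] [AddCommGroup A] [Module K A] [AddCommGroup X] [Module K X]

theorem dualAnnihilator_comap_eq_map_dualMap (p : A →ₗ[K] X) (S : Submodule K X) :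
    (S.comap p).dualAnnihilator = S.dualAnnihilator.map p.dualMap := by
  calc (S.comap p).dualAnnihilator
      = (LinearMap.ker (S.mkQ ∘ₗ p)).dualAnnihilator := by
        rw [LinearMap.ker_comp, Submodule.ker_mkQ]
    _ = LinearMap.range (S.mkQ ∘ₗ p).dualMap :=
        (LinearMap.range_dualMap_eq_dualAnnihilator_ker _).symm
    _ = (LinearMap.range S.mkQ.dualMap).map p.dualMap := by
        rw [← LinearMap.dualMap_comp_dualMap, LinearMap.range_comp]
    _ = S.dualAnnihilator.map p.dualMap := by
        rw [S.range_dualMap_mkQ_eq]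

end Annihilator

section LagrangianRelation

open LinearMap (BilinForm)

section CommRing

variable {K A X Y : Type*} [CommRing K] [AddCommGroup A] [Module K A] [AddCommGroup X] [Module K X]
  [AddCommGroup Y] [Module K Y] {B : BilinForm K X} {C : BilinForm K Y}
  {p : A →ₗ[K] X} {q : A →ₗ[K] Y}

variable (B C p q) in
/-- The linear relation `{(p a, q a) | a : A}` between `X` and `Y` is Lagrangian: it is its own
orthogonal complement in `X × Y` for the form `B - C`. The relation is encoded by the maps `p` and
`q` parametrizing it, so that it carries `S ≤ X` to `(S.comap p).map q ≤ Y`. -/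
def IsLagrangianRelation : Prop :=
  ∀ x y, (∀ a, B (p a) x = C (q a) y) ↔ ∃ a, p a = x ∧ q a = y

theorem IsLagrangianRelation.symm (h : IsLagrangianRelation B C p q) :
    IsLagrangianRelation C B q p := fun y x => by
  simpa only [eq_comm, and_comm] using h x y

end CommRing

section Field

variable {K A X Y : Type*} [Field K] [AddCommGroup A] [Module K A] [AddCommGroup X] [Module K X]
  [AddCommGroup Y] [Module K Y] {B : BilinForm K X} {C : BilinForm K Y}
  {p : A →ₗ[K] X} {q : A →ₗ[K] Y}

theorem IsLagrangianRelation.orthogonal_map_comap (h : IsLagrangianRelation B C p q)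
    (hB : Function.Surjective B.flip) (S : Submodule K X) :
    C.orthogonal ((S.comap p).map q) = ((B.orthogonal S).comap p).map q := by
  ext y
  constructor
  · intro hy
    have hann : C.flip y ∘ₗ q ∈ (S.comap p).dualAnnihilator :=
      (Submodule.mem_dualAnnihilator _).2 fun a ha => hy _ ⟨a, ha, rfl⟩
    rw [dualAnnihilator_comap_eq_map_dualMap] at hann
    obtain ⟨f, hfS, hf⟩ := hann
    obtain ⟨x, rfl⟩ := hB f
    obtain ⟨a, rfl, rfl⟩ := (h x y).1 (LinearMap.congr_fun hf)
    exact ⟨a, (Submodule.mem_dualAnnihilator _).1 hfS, rfl⟩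
  · rintro ⟨b, hb, rfl⟩ _ ⟨a, ha, rfl⟩
    exact ((h _ _).2 ⟨b, rfl, rfl⟩ a).symm.trans (hb _ ha)

end Field

end LagrangianRelation

section ProdDualForm

variable {R V W : Type*} [CommRing R] [AddCommGroup V] [Module R V] [AddCommGroup W] [Module R W]

variable (R V) in
/-- The canonical pairing on `V ⊕ V*` as a bilinear form; it is `pairLR` when `R = ℝ`. Mathlib's
`LinearMap.dualProd` is the same form with the two factors in the other order. -/
def prodDualForm : LinearMap.BilinForm R (V × Dual R V) :=
  (LinearMap.dualProd R V).congr (LinearEquiv.prodComm R (Dual R V) V)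

@[simp]
theorem prodDualForm_apply (x y : V × Dual R V) :
    prodDualForm R V x y = x.2 y.1 + y.2 x.1 := by
  simp [prodDualForm, add_comm]

theorem surjective_flip_prodDualForm [IsReflexive R V] :
    Function.Surjective (prodDualForm R V).flip := fun f => by
  obtain ⟨v, hv⟩ := (bijective_dual_eval R V).surjective (f ∘ₗ LinearMap.inr R V (Dual R V))
  refine ⟨(v, f ∘ₗ LinearMap.inl R V (Dual R V)), LinearMap.prod_ext ?_ ?_⟩
  · ext u
    simp
  · ext γ
    simpa [← Prod.zero_eq_mk] using LinearMap.congr_fun hv γ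

theorem isLagrangianRelation_prodDualForm [Projective R W] (φ : V →ₗ[R] W) :
    IsLagrangianRelation (prodDualForm R V) (prodDualForm R W)
      (LinearMap.id.prodMap φ.dualMap) (φ.prodMap LinearMap.id) := by
  rintro ⟨v, α⟩ ⟨w, β⟩
  constructor
  · intro h
    have hα : φ.dualMap β = α := by
      ext u
      simpa using (h (u, 0)).symm
    have hw : φ v = w := eval_apply_injective R <| by
      ext γ
      simpa using h (0, γ)
    exact ⟨(v, β), by simp [hα], by simp [hw]⟩
  · rintro ⟨⟨u, γ⟩, hv, hw⟩ a
    obtain ⟨rfl, rfl⟩ := Prod.ext_iff.1 hv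
    obtain ⟨rfl, rfl⟩ := Prod.ext_iff.1 hw
    simp

end ProdDualForm

section Transport

variable {V W : Type*} [AddCommGroup V] [Module ℝ V] [AddCommGroup W] [Module ℝ W]

theorem orthSet_eq_orthogonal (S : Submodule ℝ (V × Dual ℝ V)) :
    orthSet S = ((prodDualForm ℝ V).orthogonal S : Set (V × Dual ℝ V)) := by
  ext x
  simp [orthSet, pairLR, LinearMap.BilinForm.mem_orthogonal_iff, add_comm]

theorem forwardD_mono (φ : V →ₗ[ℝ] W) : Monotone (forwardD φ) := fun _ _ h =>
  Submodule.map_mono (Submodule.comap_mono h)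

theorem backwardD_mono (φ : V →ₗ[ℝ] W) : Monotone (backwardD φ) := fun _ _ h =>
  Submodule.map_mono (Submodule.comap_mono h)

theorem orthogonal_forwardD [FiniteDimensional ℝ V] (φ : V →ₗ[ℝ] W)
    (S : Submodule ℝ (V × Dual ℝ V)) :
    (prodDualForm ℝ W).orthogonal (forwardD φ S) =
      forwardD φ ((prodDualForm ℝ V).orthogonal S) :=
  (isLagrangianRelation_prodDualForm φ).orthogonal_map_comap surjective_flip_prodDualForm S

theorem orthogonal_backwardD [FiniteDimensional ℝ W] (φ : V →ₗ[ℝ] W)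
    (S : Submodule ℝ (W × Dual ℝ W)) :
    (prodDualForm ℝ V).orthogonal (backwardD φ S) =
      backwardD φ ((prodDualForm ℝ W).orthogonal S) :=
  (isLagrangianRelation_prodDualForm φ).symm.orthogonal_map_comap surjective_flip_prodDualForm S

end Transport

theorem stmt14 {V W : Type*} [AddCommGroup V] [Module ℝ V] [AddCommGroup W] [Module ℝ W]
    [FiniteDimensional ℝ V] [FiniteDimensional ℝ W] (φ : V →ₗ[ℝ] W) :
    (∀ S₁ : Submodule ℝ (V × Module.Dual ℝ V),
      (((S₁ : Set (V × Module.Dual ℝ V)) ⊆ orthSet S₁) →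
        ((forwardD φ S₁ : Set (W × Module.Dual ℝ W)) ⊆ orthSet (forwardD φ S₁))) ∧
      ((orthSet S₁ ⊆ (S₁ : Set (V × Module.Dual ℝ V))) →
        (orthSet (forwardD φ S₁) ⊆ (forwardD φ S₁ : Set (W × Module.Dual ℝ W))))) ∧
    (∀ S₂ : Submodule ℝ (W × Module.Dual ℝ W),
      (((S₂ : Set (W × Module.Dual ℝ W)) ⊆ orthSet S₂) →
        ((backwardD φ S₂ : Set (V × Module.Dual ℝ V)) ⊆ orthSet (backwardD φ S₂))) ∧
      ((orthSet S₂ ⊆ (S₂ : Set (W × Module.Dual ℝ W))) →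
        (orthSet (backwardD φ S₂) ⊆ (backwardD φ S₂ : Set (V × Module.Dual ℝ V))))) := by
  simp only [orthSet_eq_orthogonal, SetLike.coe_subset_coe, orthogonal_forwardD,
    orthogonal_backwardD]
  exact ⟨fun _ => ⟨fun h => forwardD_mono φ h, fun h => forwardD_mono φ h⟩,
    fun _ => ⟨fun h => backwardD_mono φ h, fun h => backwardD_mono φ h⟩⟩
end
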